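/- Let N ≥ 5, α ∈ (0, N), and p > (N+α)/(N−4). Then there is a constant C > 0 such that for every u ∈ D^{2,2}(G): ∑_{x∈G} (R_α ∗ |u|^p)(x)·|u(x)|^p ≤ C·( ∑_{x∈G} |Δu(x)|² )^p. -/

import Mathlib

open Filter Topology

noncomputable section

namespace Choquard

variable {G : Type*}

/-- The word metric on the Cayley graph of `(G, S)`: the least `k` such that
`y = x * s₁ * ⋯ * s_k` with each `sᵢ ∈ S`. -/
def wordDist [Group G] (S : Finset G) (x y : G) : ℕ :=
  sInf {k : ℕ | ∃ l : List G, (∀ s ∈ l, s ∈ S) ∧ l.length = k ∧ y = x * l.prod}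

/-- Convolution against a kernel: `(R ∗ f)(x) = ∑_{y ∈ G} R(x,y) f(y)`. -/
def conv (R : G → G → ℝ) (f : G → ℝ) (x : G) : ℝ := ∑' y, R x y * f y

/-- The `ℓ^q(G)` norm of `u`. -/
def lpNorm (q : ℝ) (u : G → ℝ) : ℝ := (∑' x, |u x| ^ q) ^ (1 / q)

/-- `u ∈ ℓ^q(G)`. -/
def Memlp (q : ℝ) (u : G → ℝ) : Prop := Summable fun x : G => |u x| ^ q

/-- `|∇u(x)|_p^p = ∑_{y ∼ x} |u(y) − u(x)|^p`, where `y ∼ x` iff `y = x * s`, `s ∈ S`. -/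
def gradP [Group G] (S : Finset G) (p : ℝ) (u : G → ℝ) (x : G) : ℝ :=
  ∑ s ∈ S, |u (x * s) - u x| ^ p

/-- The `D^{1,p}` norm `(∑_x ∑_{y ∼ x} |u(y) − u(x)|^p)^{1/p}`. -/
def D1Norm [Group G] (S : Finset G) (p : ℝ) (u : G → ℝ) : ℝ :=
  (∑' x, gradP S p u x) ^ (1 / p)

/-- `u ∈ D^{1,p}(G) = {u ∈ ℓ^{Np/(N−p)}(G) : ‖u‖_{D^{1,p}} < ∞}`. -/
def MemD1p [Group G] (S : Finset G) (N : ℕ) (p : ℝ) (u : G → ℝ) : Prop :=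
  Memlp ((N : ℝ) * p / ((N : ℝ) - p)) u ∧ Summable (gradP S p u)

/-- `|∇u(x)|₂² = ∑_{y ∼ x} (u(y) − u(x))²`. -/
def gradSq [Group G] (S : Finset G) (u : G → ℝ) (x : G) : ℝ :=
  ∑ s ∈ S, (u (x * s) - u x) ^ 2

/-- The `D^{1,2}` norm. -/
def D12Norm [Group G] (S : Finset G) (u : G → ℝ) : ℝ :=
  (∑' x, gradSq S u x) ^ ((1 : ℝ) / 2)

/-- `u ∈ D^{1,2}(G) = {u ∈ ℓ^{2N/(N−2)}(G) : ‖u‖_{D^{1,2}} < ∞}`. -/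
def MemD12 [Group G] (S : Finset G) (N : ℕ) (u : G → ℝ) : Prop :=
  Memlp (2 * (N : ℝ) / ((N : ℝ) - 2)) u ∧ Summable (gradSq S u)

/-- The graph Laplacian `Δu(x) = ∑_{y ∼ x} (u(y) − u(x))`. -/
def lap [Group G] (S : Finset G) (u : G → ℝ) (x : G) : ℝ :=
  ∑ s ∈ S, (u (x * s) - u x)

/-- `u ∈ D^{2,2}(G) = {u ∈ ℓ^{2N/(N−4)}(G) : ‖Δu‖_{ℓ²} < ∞}`. -/
def MemD22 [Group G] (S : Finset G) (N : ℕ) (u : G → ℝ) : Prop :=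
  Memlp (2 * (N : ℝ) / ((N : ℝ) - 4)) u ∧ Summable fun x => (lap S u x) ^ 2

/-- `u ∈ D^{2,p}(G) = {u ∈ ℓ^{Np/(N−2p)}(G) : ‖Δu‖_{ℓ^p} < ∞}`. -/
def MemD2p [Group G] (S : Finset G) (N : ℕ) (p : ℝ) (u : G → ℝ) : Prop :=
  Memlp ((N : ℝ) * p / ((N : ℝ) - 2 * p)) u ∧ Summable fun x => |lap S u x| ^ p

/-- The nonlocal energy `∑_{x ∈ G} (R_α ∗ |u|^p)(x) |u(x)|^p`. -/
def energy (R : G → G → ℝ) (p : ℝ) (u : G → ℝ) : ℝ :=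
  ∑' x, conv R (fun y => |u y| ^ p) x * |u x| ^ p

/-- The optimal constant `K` of the Sobolev-type inequality. -/
def bestK [Group G] (S : Finset G) (N : ℕ) (R : G → G → ℝ) (p : ℝ) : ℝ :=
  sSup {t : ℝ | ∃ u : G → ℝ, MemD12 S N u ∧ D12Norm S u = 1 ∧ t = energy R p u}

/-- The discrete `p`-Laplacian. -/
def pLap [Group G] (S : Finset G) (p : ℝ) (u : G → ℝ) (x : G) : ℝ :=
  ∑ s ∈ S, |u (x * s) - u x| ^ (p - 2) * (u (x * s) - u x)

/-- The cutoff `Ψ_r`, the indicator of `{x : d(x,e) ≥ r + 1}`. -/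
def cutoff [Group G] (S : Finset G) (r : ℕ) (x : G) : ℝ :=
  if r + 1 ≤ wordDist S 1 x then 1 else 0

/-! ### The lazy random walk operator -/

/-- A small positive step size. -/
def kap (S : Finset G) : ℝ := 1 / (2 * ((S.card : ℝ) + 1))

theorem kap_pos (S : Finset G) : 0 < kap S := by unfold kap; positivity

theorem kap_card (S : Finset G) : kap S * (S.card : ℝ) ≤ 1 / 2 := by
  unfold kap
  rw [one_div_mul_eq_div, div_le_div_iff₀ (by positivity) (by positivity)]
  linarith

/-- The lazy walk operator `P = I + κ Δ`. -/
def lazyP [Group G] (S : Finset G) (f : G → ℝ) (x : G) : ℝ := f x + kap S * lap S f x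

theorem lazyP_eq [Group G] (S : Finset G) (f : G → ℝ) (x : G) :
    lazyP S f x = (1 - kap S * S.card) * f x + kap S * ∑ s ∈ S, f (x * s) := by
  simp only [lazyP, lap, Finset.sum_sub_distrib, Finset.sum_const, nsmul_eq_mul]
  ring

theorem summable_shift [Group G] {f : G → ℝ} (hf : Summable f) (g : G) :
    Summable fun x => f (x * g) :=
  (Equiv.mulRight g).summable_iff.mpr hf

theorem tsum_shift [Group G] (f : G → ℝ) (g : G) : ∑' x, f (x * g) = ∑' x, f x :=
  (Equiv.mulRight g).tsum_eq f

theorem summable_diff [Group G] {f : G → ℝ} (hf : Summable fun x => f x ^ 2) (g : G) :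
    Summable fun x => (f (x * g) - f x) ^ 2 := by
  have h := summable_shift hf g
  refine Summable.of_nonneg_of_le (fun x => sq_nonneg _) (fun x => ?_)
    ((h.add hf).mul_left 2)
  nlinarith [sq_nonneg (f (x * g) + f x)]

/-- Dirichlet form. -/
def dir [Group G] (S : Finset G) (f : G → ℝ) : ℝ := ∑' x, ∑ s ∈ S, (f (x * s) - f x) ^ 2

theorem summable_dir [Group G] (S : Finset G) {f : G → ℝ} (hf : Summable fun x => f x ^ 2) :
    Summable fun x => ∑ s ∈ S, (f (x * s) - f x) ^ 2 :=
  summable_sum fun s _ => summable_diff hf s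

theorem lazyP_sq_le [Group G] (S : Finset G) (f : G → ℝ) (x : G) :
    lazyP S f x ^ 2 ≤ f x ^ 2 + kap S * ∑ s ∈ S, (f (x * s) ^ 2 - f x ^ 2)
      - kap S / 2 * ∑ s ∈ S, (f (x * s) - f x) ^ 2 := by
  have h1 : ∑ s ∈ S, (f (x * s) ^ 2 - f x ^ 2)
      = 2 * f x * lap S f x + ∑ s ∈ S, (f (x * s) - f x) ^ 2 := by
    rw [lap, Finset.mul_sum, ← Finset.sum_add_distrib]
    exact Finset.sum_congr rfl fun s _ => by ring
  have h2 : lap S f x ^ 2 ≤ S.card * ∑ s ∈ S, (f (x * s) - f x) ^ 2 := by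
    unfold lap
    exact sq_sum_le_card_mul_sum_sq
  have hk := kap_pos S
  have hc := kap_card S
  have hD : 0 ≤ ∑ s ∈ S, (f (x * s) - f x) ^ 2 := Finset.sum_nonneg fun s _ => sq_nonneg _
  rw [h1, lazyP]
  generalize ∑ s ∈ S, (f (x * s) - f x) ^ 2 = D at *
  have h3 : kap S ^ 2 * lap S f x ^ 2 ≤ kap S ^ 2 * (S.card * D) :=
    mul_le_mul_of_nonneg_left h2 (sq_nonneg _)
  have h4 : kap S * (kap S * S.card) * D ≤ kap S * (1/2) * D := by gcongr
  nlinarith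

theorem lazyP_l2 [Group G] (S : Finset G) {f : G → ℝ} (hf : Summable fun x => f x ^ 2) :
    (Summable fun x => lazyP S f x ^ 2) ∧
      ∑' x, lazyP S f x ^ 2 ≤ ∑' x, f x ^ 2 - kap S / 2 * dir S f := by
  have hs : ∀ s, HasSum (fun x => f (x * s) ^ 2 - f x ^ 2) 0 := fun s => by
    have h1 := (summable_shift hf s).hasSum.sub hf.hasSum
    rwa [tsum_shift (fun x => f x ^ 2), sub_self] at h1
  have h0 : HasSum (fun x => ∑ s ∈ S, (f (x * s) ^ 2 - f x ^ 2)) 0 := by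
    have := hasSum_sum (s := S) fun s _ => hs s
    simpa using this
  have hH := (hf.hasSum.add (h0.mul_left (kap S))).sub
    ((summable_dir S hf).hasSum.mul_left (kap S / 2))
  have hsum : Summable fun x => lazyP S f x ^ 2 :=
    Summable.of_nonneg_of_le (fun x => sq_nonneg _) (lazyP_sq_le S f) hH.summable
  refine ⟨hsum, ?_⟩
  have := hasSum_le (lazyP_sq_le S f) hsum.hasSum hH
  simpa [dir] using this

theorem dir_nonneg [Group G] (S : Finset G) (f : G → ℝ) : 0 ≤ dir S f :=
  tsum_nonneg fun _ => Finset.sum_nonneg fun _ _ => sq_nonneg _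

theorem iter_l2 [Group G] (S : Finset G) {f : G → ℝ} (hf : Summable fun x => f x ^ 2) (n : ℕ) :
    (Summable fun x => ((lazyP S)^[n] f) x ^ 2) ∧
      ∑' x, ((lazyP S)^[n] f) x ^ 2 ≤ ∑' x, f x ^ 2 := by
  induction n with
  | zero => exact ⟨hf, le_rfl⟩
  | succ n ih =>
    rw [Function.iterate_succ_apply']
    obtain ⟨h1, h2⟩ := lazyP_l2 S ih.1
    refine ⟨h1, h2.trans ?_⟩
    have := mul_nonneg (half_pos (kap_pos S)).le (dir_nonneg S ((lazyP S)^[n] f))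
    linarith [ih.2]

/-- Pseudo-Poincare inequality. -/
theorem pseudo_poincare [Group G] (S : Finset G) {f : G → ℝ} (hf : Summable fun x => f x ^ 2)
    (l : List G) (hl : ∀ s ∈ l, s ∈ S) :
    ∑' x, (f (x * l.prod) - f x) ^ 2 ≤ (l.length : ℝ) ^ 2 * dir S f := by
  induction l with
  | nil => simp
  | cons s l ih =>
    have hs : s ∈ S := hl s (by simp)
    have ih := ih fun t ht => hl t (by simp [ht])
    have hd : ∑' x, (f (x * s) - f x) ^ 2 ≤ dir S f := by
      refine Summable.tsum_le_tsum (fun x => ?_) (summable_diff hf s) (summable_dir S hf)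
      exact Finset.single_le_sum (f := fun s => (f (x * s) - f x) ^ 2)
        (fun _ _ => sq_nonneg _) hs
    rcases Nat.eq_zero_or_pos l.length with h0 | h0
    · rw [List.length_eq_zero_iff] at h0
      subst h0
      simpa using hd
    · set k : ℝ := (l.length : ℝ) with hk
      have hkpos : 0 < k := by rw [hk]; exact_mod_cast h0
      have hA := summable_shift (summable_diff hf l.prod) s
      have hB := summable_diff hf s
      have hpt : ∀ x, (f (x * (s :: l).prod) - f x) ^ 2 ≤
          (1 + 1 / k) * (f (x * s * l.prod) - f (x * s)) ^ 2
            + (1 + k) * (f (x * s) - f x) ^ 2 := by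
        intro x
        rw [List.prod_cons, ← mul_assoc]
        generalize f (x * s * l.prod) = a
        generalize f (x * s) = b
        generalize f x = c
        have : (1 + 1 / k) * (a - b) ^ 2 + (1 + k) * (b - c) ^ 2 - (a - c) ^ 2
            = (1 / k) * ((a - b) - k * (b - c)) ^ 2 := by field_simp; ring
        have h2 : 0 ≤ (1 / k) * ((a - b) - k * (b - c)) ^ 2 := by positivity
        linarith
      have h1 := Summable.tsum_le_tsum hpt (summable_diff hf _)
        ((hA.mul_left (1 + 1 / k)).add (hB.mul_left (1 + k)))
      rw [Summable.tsum_add (hA.mul_left _) (hB.mul_left _), tsum_mul_left, tsum_mul_left,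
        tsum_shift (fun x => (f (x * l.prod) - f x) ^ 2)] at h1
      refine h1.trans ?_
      have h2 : (1 + 1 / k) * ∑' x, (f (x * l.prod) - f x) ^ 2 ≤ (1 + 1 / k) * (k ^ 2 * dir S f) :=
        mul_le_mul_of_nonneg_left ih (by positivity)
      have h3 : (1 + k) * ∑' x, (f (x * s) - f x) ^ 2 ≤ (1 + k) * dir S f :=
        mul_le_mul_of_nonneg_left hd (by positivity)
      have h4 : (1 + 1 / k) * (k ^ 2 * dir S f) + (1 + k) * dir S f = (k + 1) ^ 2 * dir S f := by
        field_simp; ring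
      rw [List.length_cons]
      push_cast
      rw [← hk]
      linarith

/-! ### The word metric -/

theorem exists_word [Group G] (S : Finset G) (hS_gen : Subgroup.closure (S : Set G) = ⊤)
    (hS_sym : ∀ s ∈ S, s⁻¹ ∈ S) (g : G) :
    ∃ l : List G, (∀ s ∈ l, s ∈ S) ∧ g = l.prod := by
  have hg : g ∈ (Subgroup.closure (S : Set G)).toSubmonoid := by rw [hS_gen]; trivial
  rw [Subgroup.closure_toSubmonoid] at hg
  obtain ⟨l, hl, rfl⟩ := Submonoid.exists_list_of_mem_closure hg
  refine ⟨l, fun s hs => ?_, rfl⟩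
  rcases hl s hs with h | h
  · exact h
  · simpa using hS_sym _ h

theorem wordDist_spec [Group G] (S : Finset G) (hS_gen : Subgroup.closure (S : Set G) = ⊤)
    (hS_sym : ∀ s ∈ S, s⁻¹ ∈ S) (x y : G) :
    ∃ l : List G, (∀ s ∈ l, s ∈ S) ∧ l.length = wordDist S x y ∧ y = x * l.prod := by
  have hne : {k : ℕ | ∃ l : List G, (∀ s ∈ l, s ∈ S) ∧ l.length = k ∧ y = x * l.prod}.Nonempty := by
    obtain ⟨l, hl, h⟩ := exists_word S hS_gen hS_sym (x⁻¹ * y)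
    exact ⟨l.length, l, hl, rfl, by rw [← h]; group⟩
  exact Nat.sInf_mem hne

theorem wordDist_left [Group G] (S : Finset G) (x y : G) :
    wordDist S x y = wordDist S 1 (x⁻¹ * y) := by
  unfold wordDist
  congr 1
  ext k
  simp only [one_mul, Set.mem_ofPred_eq, inv_mul_eq_iff_eq_mul]

theorem wordDist_pos [Group G] (S : Finset G) (hS_gen : Subgroup.closure (S : Set G) = ⊤)
    (hS_sym : ∀ s ∈ S, s⁻¹ ∈ S) (x y : G) (h : x ≠ y) : 1 ≤ wordDist S x y := by
  obtain ⟨l, _, h2, h3⟩ := wordDist_spec S hS_gen hS_sym x y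
  by_contra hc
  have : l.length = 0 := by omega
  rw [List.length_eq_zero_iff] at this
  subst this
  exact h (by simpa using h3.symm)

/-! ### The heat kernel -/

/-- The heat kernel of the lazy walk. -/
def hk [Group G] (S : Finset G) : ℕ → G → ℝ
  | 0 => by classical exact fun g => if g = 1 then 1 else 0
  | n + 1 => lazyP S (hk S n)

theorem hk_nonneg [Group G] (S : Finset G) (n : ℕ) (g : G) : 0 ≤ hk S n g := by
  induction n generalizing g with
  | zero => simp only [hk]; split_ifs <;> norm_num
  | succ n ih =>
    rw [hk, lazyP_eq]
    have h1 := kap_card S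
    have h2 := (kap_pos S).le
    have h3 : 0 ≤ ∑ s ∈ S, hk S n (g * s) := Finset.sum_nonneg fun s _ => ih _
    have h4 := ih g
    have : 0 ≤ 1 - kap S * S.card := by linarith
    positivity

theorem hk_hasSum [Group G] (S : Finset G) (n : ℕ) : HasSum (hk S n) 1 := by
  induction n with
  | zero =>
    classical
    have := hasSum_ite_eq (1 : G) (1 : ℝ)
    simp only [hk]
    convert this
  | succ n ih =>
    have h1 : ∀ s : G, HasSum (fun x => hk S n (x * s) - hk S n x) 0 := fun s => by
      have := (summable_shift ih.summable s).hasSum.sub ih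
      rwa [tsum_shift, ih.tsum_eq, sub_self] at this
    have h2 : HasSum (lap S (hk S n)) 0 := by
      have := hasSum_sum (s := S) fun s _ => h1 s
      rw [Finset.sum_const_zero] at this
      exact this
    have := ih.add (h2.mul_left (kap S))
    rw [mul_zero, add_zero] at this
    exact this

theorem hk_le_one [Group G] (S : Finset G) (n : ℕ) (g : G) : hk S n g ≤ 1 := by
  have := (hk_hasSum S n)
  rw [← this.tsum_eq]
  exact this.summable.le_tsum g fun _ _ => hk_nonneg S n _

theorem hk_sq_summable [Group G] (S : Finset G) (n : ℕ) : Summable fun g => hk S n g ^ 2 := by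
  refine Summable.of_nonneg_of_le (fun x => sq_nonneg _) (fun x => ?_) (hk_hasSum S n).summable
  nlinarith [hk_nonneg S n x, hk_le_one S n x]

/-- Squared `ℓ²` norm of the heat kernel. -/
def hk2 [Group G] (S : Finset G) (n : ℕ) : ℝ := ∑' g, hk S n g ^ 2

theorem hk2_pos [Group G] (S : Finset G) (n : ℕ) : 0 < hk2 S n := by
  have h0 : ∃ g, hk S n g ≠ 0 := by
    by_contra! h
    have h1 := (hk_hasSum S n).tsum_eq
    simp [h] at h1
  obtain ⟨g, hg⟩ := h0
  exact (hk_sq_summable S n).tsum_pos (fun x => sq_nonneg _) g (by positivity)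

theorem hk2_le_one [Group G] (S : Finset G) (n : ℕ) : hk2 S n ≤ 1 := by
  rw [← (hk_hasSum S n).tsum_eq]
  refine Summable.tsum_le_tsum (fun x => ?_) (hk_sq_summable S n) (hk_hasSum S n).summable
  nlinarith [hk_nonneg S n x, hk_le_one S n x]

theorem hk2_succ [Group G] (S : Finset G) (n : ℕ) :
    hk2 S (n + 1) ≤ hk2 S n - kap S / 2 * dir S (hk S n) :=
  (lazyP_l2 S (hk_sq_summable S n)).2

/-- Nash type inequality. -/
theorem hk2_nash [Group G] (S : Finset G) (n : ℕ) (B : Finset G) (r : ℕ)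
    (hB : ∀ g ∈ B, ∃ l : List G, (∀ s ∈ l, s ∈ S) ∧ l.length ≤ r ∧ g = l.prod) :
    (B.card : ℝ) * (hk2 S n - 1 / 2 * (r : ℝ) ^ 2 * dir S (hk S n)) ≤ 1 := by
  have hsq := hk_sq_summable S n
  have hS1 := hk_hasSum S n
  have hid : ∀ g x, hk S n x * hk S n (x * g) =
      1 / 2 * (hk S n x ^ 2 + hk S n (x * g) ^ 2 - (hk S n (x * g) - hk S n x) ^ 2) := by
    intro g x; ring
  have hsum : ∀ g, HasSum (fun x => hk S n x * hk S n (x * g))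
      (1 / 2 * (hk2 S n + hk2 S n - ∑' x, (hk S n (x * g) - hk S n x) ^ 2)) := by
    intro g
    simp only [hid]
    have h2 := (summable_shift hsq g).hasSum
    rw [tsum_shift (fun x => hk S n x ^ 2)] at h2
    exact ((hsq.hasSum.add h2).sub (summable_diff hsq g).hasSum).mul_left _
  have hlow : ∀ g ∈ B, hk2 S n - 1 / 2 * (r : ℝ) ^ 2 * dir S (hk S n) ≤
      1 / 2 * (hk2 S n + hk2 S n - ∑' x, (hk S n (x * g) - hk S n x) ^ 2) := by
    intro g hg
    obtain ⟨l, hl, hlr, rfl⟩ := hB g hg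
    have h1 := pseudo_poincare S hsq l hl
    have h2 : (l.length : ℝ) ^ 2 * dir S (hk S n) ≤ (r : ℝ) ^ 2 * dir S (hk S n) := by
      have := dir_nonneg S (hk S n)
      gcongr
    linarith
  have htot := hasSum_sum (s := B) fun g _ => hsum g
  have hup : ∑ g ∈ B, 1 / 2 * (hk2 S n + hk2 S n - ∑' x, (hk S n (x * g) - hk S n x) ^ 2) ≤ 1 := by
    refine hasSum_le (fun x => ?_) htot hS1
    rw [← Finset.mul_sum]
    have h1 : ∑ g ∈ B, hk S n (x * g) ≤ 1 := by
      have h2 : HasSum (fun g => hk S n (x * g)) 1 := (Equiv.mulLeft x).hasSum_iff.mpr hS1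
      exact sum_le_hasSum B (fun _ _ => hk_nonneg S n _) h2
    exact mul_le_of_le_one_right (hk_nonneg S n x) h1
  refine le_trans ?_ hup
  rw [← nsmul_eq_mul]
  exact Finset.card_nsmul_le_sum _ _ _ hlow

theorem exists_ball [Group G] (S : Finset G) (hS_gen : Subgroup.closure (S : Set G) = ⊤)
    (hS_sym : ∀ s ∈ S, s⁻¹ ∈ S)
    (N : ℕ) (C₁ : ℝ) (hC₁ : 0 < C₁) (r : ℕ) (hr : 1 ≤ r)
    (hgrowth : C₁ * (r : ℝ) ^ N ≤ (Nat.card {x : G // wordDist S 1 x ≤ r} : ℝ)) :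
    ∃ B : Finset G, (∀ g, g ∈ B ↔ wordDist S 1 g ≤ r) ∧
      B.card = Nat.card {x : G // wordDist S 1 x ≤ r} ∧
      (∀ g ∈ B, ∃ l : List G, (∀ s ∈ l, s ∈ S) ∧ l.length ≤ r ∧ g = l.prod) := by
  have hpos : 0 < Nat.card {x : G // wordDist S 1 x ≤ r} := by
    have hr' : (0 : ℝ) < r := by exact_mod_cast hr
    have : (0 : ℝ) < (Nat.card {x : G // wordDist S 1 x ≤ r} : ℝ) :=
      lt_of_lt_of_le (by positivity) hgrowth
    exact_mod_cast this
  have hfin : Finite {x : G // wordDist S 1 x ≤ r} := Nat.finite_of_card_ne_zero hpos.ne'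
  have hfin' : Set.Finite {x : G | wordDist S 1 x ≤ r} := hfin
  have hmem : ∀ g, g ∈ hfin'.toFinset ↔ wordDist S 1 g ≤ r := fun g => by simp
  refine ⟨hfin'.toFinset, hmem, ?_, ?_⟩
  · rw [← Set.ncard_eq_toFinset_card _ hfin']
    rfl
  · intro g hg
    obtain ⟨l, h1, h2, h3⟩ := wordDist_spec S hS_gen hS_sym 1 g
    exact ⟨l, h1, h2.le.trans ((hmem g).1 hg), by simpa using h3⟩

/-- One step of the decay recursion. -/
theorem hk2_step [Group G] (S : Finset G) (hS_gen : Subgroup.closure (S : Set G) = ⊤)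
    (hS_sym : ∀ s ∈ S, s⁻¹ ∈ S)
    (N : ℕ) (hN : 5 ≤ N) (C₁ : ℝ) (hC₁ : 0 < C₁)
    (hgrowth : ∀ n : ℕ, 1 ≤ n →
      C₁ * (n : ℝ) ^ N ≤ (Nat.card {x : G // wordDist S 1 x ≤ n} : ℝ)) :
    ∃ c : ℝ, 0 < c ∧ ∀ n, hk2 S (n + 1) ≤ hk2 S n * (1 - c * hk2 S n ^ (2 / (N : ℝ))) := by
  have hNpos : (0 : ℝ) < N := by exact_mod_cast (by omega : 0 < N)
  set M : ℝ := 1 + (2 / C₁) ^ (1 / (N : ℝ)) with hM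
  have hMpos : 0 < M := by positivity
  refine ⟨kap S / (2 * M ^ 2), by have := kap_pos S; positivity, fun n => ?_⟩
  set u := hk2 S n with hu
  have hupos : 0 < u := hk2_pos S n
  have hu1 : u ≤ 1 := hk2_le_one S n
  set ρ : ℝ := (2 / (C₁ * u)) ^ (1 / (N : ℝ)) with hρ
  have hρpos : 0 < ρ := by positivity
  set r : ℕ := ⌈ρ⌉₊ with hr
  have hr1 : 1 ≤ r := Nat.one_le_iff_ne_zero.2 (Nat.ceil_pos.2 hρpos).ne'
  have hρr : ρ ≤ r := Nat.le_ceil ρ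
  have hrρ : (r : ℝ) ≤ 1 + ρ := by
    have := Nat.ceil_lt_add_one hρpos.le
    linarith
  have hρN : ρ ^ N = 2 / (C₁ * u) := by
    rw [hρ, ← Real.rpow_natCast, ← Real.rpow_mul (by positivity), one_div_mul_cancel hNpos.ne',
      Real.rpow_one]
  have hv : (1 : ℝ) ≤ u ^ (-(1 / (N : ℝ))) :=
    Real.one_le_rpow_of_pos_of_le_one_of_nonpos hupos hu1 (by simp)
  have hρ2 : ρ = (2 / C₁) ^ (1 / (N : ℝ)) * u ^ (-(1 / (N : ℝ))) := by
    rw [hρ, ← div_div, Real.div_rpow (by positivity) hupos.le, Real.rpow_neg hupos.le,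
      div_eq_mul_inv]
  have hrM : (r : ℝ) ≤ M * u ^ (-(1 / (N : ℝ))) := by
    rw [hM, add_mul, ← hρ2]; linarith
  obtain ⟨B, -, hBc, hBl⟩ := exists_ball S hS_gen hS_sym N C₁ hC₁ r hr1 (hgrowth r hr1)
  have hnash := hk2_nash S n B r hBl
  rw [← hu] at hnash
  have hcard : 2 / u ≤ (B.card : ℝ) := by
    rw [hBc]
    refine le_trans ?_ (hgrowth r hr1)
    have h1 : ρ ^ N ≤ (r : ℝ) ^ N := pow_le_pow_left₀ hρpos.le hρr N
    have h2 : C₁ * ρ ^ N = 2 / u := by rw [hρN]; field_simp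
    rw [← h2]
    exact mul_le_mul_of_nonneg_left h1 hC₁.le
  set D := dir S (hk S n) with hD
  have hD0 : 0 ≤ D := dir_nonneg _ _
  have hrpos : (0 : ℝ) < r := by exact_mod_cast hr1
  have hD1 : u ≤ (r : ℝ) ^ 2 * D := by
    by_contra hc
    push Not at hc
    have h1 : u / 2 < u - 1 / 2 * (r : ℝ) ^ 2 * D := by linarith
    have h2 : 2 / u * (u / 2) < (B.card : ℝ) * (u - 1 / 2 * (r : ℝ) ^ 2 * D) := by
      have h3 : 0 < 2 / u := by positivity
      exact mul_lt_mul' hcard h1 (by positivity) (by linarith [h3])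
    have h3 : 2 / u * (u / 2) = 1 := by field_simp
    linarith
  have hr2 : (r : ℝ) ^ 2 ≤ M ^ 2 * (u ^ (2 / (N : ℝ)))⁻¹ := by
    have h1 := pow_le_pow_left₀ hrpos.le hrM 2
    rw [mul_pow, ← Real.rpow_mul_natCast hupos.le] at h1
    rw [← Real.rpow_neg hupos.le]
    have he : -(1 / (N : ℝ)) * ((2 : ℕ) : ℝ) = -(2 / (N : ℝ)) := by push_cast; ring
    rwa [he] at h1
  have hup : 0 < u ^ (2 / (N : ℝ)) := by positivity
  have hD2 : u * u ^ (2 / (N : ℝ)) / M ^ 2 ≤ D := by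
    have h1 : u ≤ M ^ 2 * (u ^ (2 / (N : ℝ)))⁻¹ * D :=
      hD1.trans (mul_le_mul_of_nonneg_right hr2 hD0)
    rw [div_le_iff₀ (by positivity)]
    calc u * u ^ (2 / (N : ℝ)) ≤ M ^ 2 * (u ^ (2 / (N : ℝ)))⁻¹ * D * u ^ (2 / (N : ℝ)) := by gcongr
      _ = D * M ^ 2 := by field_simp
  have hfin := hk2_succ S n
  rw [← hu, ← hD] at hfin
  have h5 : kap S / 2 * (u * u ^ (2 / (N : ℝ)) / M ^ 2) ≤ kap S / 2 * D :=
    mul_le_mul_of_nonneg_left hD2 (half_pos (kap_pos S)).le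
  have h6 : u * (1 - kap S / (2 * M ^ 2) * u ^ (2 / (N : ℝ)))
      = u - kap S / 2 * (u * u ^ (2 / (N : ℝ)) / M ^ 2) := by
    field_simp
  rw [h6]; linarith

theorem hk2_decay [Group G] (S : Finset G) (hS_gen : Subgroup.closure (S : Set G) = ⊤)
    (hS_sym : ∀ s ∈ S, s⁻¹ ∈ S)
    (N : ℕ) (hN : 5 ≤ N) (C₁ : ℝ) (hC₁ : 0 < C₁)
    (hgrowth : ∀ n : ℕ, 1 ≤ n →
      C₁ * (n : ℝ) ^ N ≤ (Nat.card {x : G // wordDist S 1 x ≤ n} : ℝ)) :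
    ∃ A : ℝ, 0 < A ∧ ∀ n : ℕ, hk2 S n ≤ A * ((n : ℝ) + 1) ^ (-((N : ℝ) / 2)) := by
  obtain ⟨c, hc, hstep⟩ := hk2_step S hS_gen hS_sym N hN C₁ hC₁ hgrowth
  have hN5 : (5 : ℝ) ≤ N := by exact_mod_cast hN
  have hNpos : (0 : ℝ) < N := by linarith
  set a : ℝ := 2 / (N : ℝ) with ha
  have ha0 : 0 < a := by positivity
  have ha1 : a ≤ 1 := by rw [ha, div_le_one hNpos]; linarith
  set b := min 1 (a * c) with hb
  have hb0 : 0 < b := lt_min one_pos (by positivity)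
  have hbac : b ≤ a * c := min_le_right _ _
  have hinv : ∀ n : ℕ, b * ((n : ℝ) + 1) ≤ (hk2 S n ^ a)⁻¹ := by
    intro n
    induction n with
    | zero =>
      have h1 : hk2 S 0 ^ a ≤ 1 := Real.rpow_le_one (hk2_pos S 0).le (hk2_le_one S 0) ha0.le
      have h2 : 0 < hk2 S 0 ^ a := Real.rpow_pos_of_pos (hk2_pos S 0) a
      have h3 := (one_le_inv₀ h2).2 h1
      have h4 : b ≤ 1 := min_le_left _ _
      simp; linarith
    | succ n ih =>
      set u := hk2 S n with hu
      have hupos : 0 < u := hk2_pos S n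
      set t := u ^ a with ht
      have htpos : 0 < t := Real.rpow_pos_of_pos hupos a
      have hst : hk2 S (n + 1) ≤ u * (1 - c * t) := hstep n
      have hpos' : 0 < hk2 S (n + 1) := hk2_pos S (n + 1)
      have h1ct : 0 < 1 - c * t := by
        by_contra h
        push Not at h
        nlinarith
      have h1 : hk2 S (n + 1) ^ a ≤ t * (1 - a * c * t) := by
        calc hk2 S (n + 1) ^ a ≤ (u * (1 - c * t)) ^ a := Real.rpow_le_rpow hpos'.le hst ha0.le
          _ = t * (1 - c * t) ^ a := Real.mul_rpow hupos.le h1ct.le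
          _ ≤ t * (1 - a * c * t) := by
            have := rpow_one_add_le_one_add_mul_self (s := -(c * t)) (by linarith) ha0.le ha1
            gcongr
            calc (1 - c * t) ^ a = (1 + -(c * t)) ^ a := by ring_nf
              _ ≤ 1 + a * -(c * t) := this
              _ = 1 - a * c * t := by ring
      have h2 : 0 < hk2 S (n + 1) ^ a := Real.rpow_pos_of_pos hpos' a
      have h3 : 0 < 1 - a * c * t := by
        by_contra h
        push Not at h
        nlinarith
      have h4 : t⁻¹ + b ≤ (hk2 S (n + 1) ^ a)⁻¹ := by
        have h5 : (t * (1 - a * c * t))⁻¹ ≤ (hk2 S (n + 1) ^ a)⁻¹ := inv_anti₀ h2 h1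
        refine le_trans ?_ h5
        rw [le_inv_comm₀ (by positivity) (by positivity)]
        rw [inv_eq_one_div, le_div_iff₀ (by positivity)]
        have h6 : t * (1 - a * c * t) * (t⁻¹ + b) = (1 - a * c * t) * (1 + b * t) := by
          field_simp
        rw [h6]
        have h7 : b * t ≤ a * c * t := by gcongr
        have h8 : 0 ≤ a * c * t * (b * t) := by positivity
        nlinarith
      push_cast
      linarith
  refine ⟨b ^ (-((N : ℝ) / 2)), by positivity, fun n => ?_⟩
  have hupos : 0 < hk2 S n := hk2_pos S n
  have h1 := hinv n
  rw [← Real.mul_rpow hb0.le (by positivity)]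
  have h2 : hk2 S n = ((hk2 S n ^ a)⁻¹) ^ (-((N : ℝ) / 2)) := by
    rw [← Real.rpow_neg hupos.le, ← Real.rpow_mul hupos.le]
    have : -a * -((N : ℝ) / 2) = 1 := by rw [ha]; field_simp
    rw [this, Real.rpow_one]
  rw [h2]
  exact Real.rpow_le_rpow_of_nonpos (by positivity) h1 (by linarith)

/-! ### Kernel representation -/

theorem hasSum_congr_fun {f g : G → ℝ} {a : ℝ} (h : HasSum f a) (hfg : ∀ x, g x = f x) :
    HasSum g a := by
  rwa [show g = f from funext hfg]

theorem iter_kernel [Group G] (S : Finset G) (hS_sym : ∀ s ∈ S, s⁻¹ ∈ S) (n : ℕ) :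
    ∀ (v : G → ℝ) (b : ℝ), (∀ x, |v x| ≤ b) → ∀ x,
      HasSum (fun g => hk S n g * v (x * g)) ((lazyP S)^[n] v x) := by
  induction n with
  | zero =>
    intro v b hb x
    classical
    have := hasSum_ite_eq (1 : G) (v x)
    have he : (fun g => hk S 0 g * v (x * g)) = fun g => if g = 1 then v x else 0 := by
      funext g
      by_cases h : g = 1
      · simp [hk, h]
      · simp [hk, h]
    rw [he]
    exact this
  | succ n ih =>
    intro v b hb x
    have hPb : ∀ y, |lazyP S v y| ≤ b := by
      intro y
      rw [lazyP_eq]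
      have h1 := kap_card S
      have h2 := kap_pos S
      have h3 : |∑ s ∈ S, v (y * s)| ≤ S.card * b := by
        refine (Finset.abs_sum_le_sum_abs _ _).trans ?_
        rw [← nsmul_eq_mul]
        exact Finset.sum_le_card_nsmul _ _ _ fun s _ => hb _
      have h4 : 0 ≤ 1 - kap S * S.card := by linarith
      calc _ ≤ |(1 - kap S * S.card) * v y| + |kap S * ∑ s ∈ S, v (y * s)| := abs_add_le _ _
        _ = (1 - kap S * S.card) * |v y| + kap S * |∑ s ∈ S, v (y * s)| := by
          rw [abs_mul, abs_mul, abs_of_nonneg h4, abs_of_pos h2]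
        _ ≤ (1 - kap S * S.card) * b + kap S * (S.card * b) := by
          gcongr
          exact hb y
        _ = b := by ring
    have hI := ih (lazyP S v) b hPb x
    rw [Function.iterate_succ_apply]
    have hsm : ∀ h : G → G, Summable fun g => hk S n g * v (h g) := by
      intro h
      refine Summable.of_norm_bounded (g := fun g => hk S n g * b)
        ((hk_hasSum S n).summable.mul_right b) fun g => ?_
      rw [Real.norm_eq_abs, abs_mul, abs_of_nonneg (hk_nonneg S n g)]
      exact mul_le_mul_of_nonneg_left (hb _) (hk_nonneg S n g)
    have e1 : HasSum (fun g => hk S n g * lazyP S v (x * g))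
        ((1 - kap S * S.card) * (∑' g, hk S n g * v (x * g)) +
          kap S * ∑ s ∈ S, ∑' g, hk S n g * v (x * g * s)) := by
      have h1 := ((hsm (fun g => x * g)).hasSum.mul_left (1 - kap S * S.card)).add
        ((hasSum_sum (s := S) fun s _ => (hsm (fun g => x * g * s)).hasSum).mul_left (kap S))
      refine hasSum_congr_fun h1 fun g => ?_
      rw [lazyP_eq, ← Finset.mul_sum]; ring
    have hsh : ∀ s : G, HasSum (fun g => hk S n (g * s⁻¹) * v (x * g))
        (∑' g, hk S n g * v (x * g * s)) := by
      intro s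
      have h1 := (hsm (fun g => x * g * s)).hasSum
      have h2 := (Equiv.mulRight s⁻¹).hasSum_iff.mpr h1
      convert h2 using 2 with g
      simp [mul_assoc]
    have e2 : HasSum (fun g => hk S (n + 1) g * v (x * g))
        ((1 - kap S * S.card) * (∑' g, hk S n g * v (x * g)) +
          kap S * ∑ s ∈ S, ∑' g, hk S n g * v (x * g * s)) := by
      have h1 := ((hsm (fun g => x * g)).hasSum.mul_left (1 - kap S * S.card)).add
        ((hasSum_sum (s := S) fun s _ => hsh s).mul_left (kap S))
      refine hasSum_congr_fun h1 fun g => ?_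
      have h3 : ∑ s ∈ S, hk S n (g * s) = ∑ s ∈ S, hk S n (g * s⁻¹) :=
        Finset.sum_nbij' (fun s => s⁻¹) (fun s => s⁻¹) hS_sym hS_sym
          (by simp) (by simp) (by simp)
      rw [show hk S (n + 1) g = lazyP S (hk S n) g from rfl, lazyP_eq, ← Finset.sum_mul, h3]; ring
    rw [hI.unique e1]
    exact e2

theorem iter_sup [Group G] (S : Finset G) (hS_sym : ∀ s ∈ S, s⁻¹ ∈ S) (n : ℕ)
    (f : G → ℝ) (hf : Summable fun x => f x ^ 2) (x : G) :
    ((lazyP S)^[n] f x) ^ 2 ≤ hk2 S n * ∑' y, f y ^ 2 := by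
  have hb : ∀ y, |f y| ≤ Real.sqrt (∑' y, f y ^ 2) := fun y => by
    apply Real.abs_le_sqrt
    exact hf.le_tsum y fun _ _ => sq_nonneg _
  have h1 := iter_kernel S hS_sym n f _ hb x
  have h2 : Tendsto (fun F : Finset G => (∑ g ∈ F, hk S n g * f (x * g)) ^ 2) atTop
      (𝓝 (((lazyP S)^[n] f x) ^ 2)) := Tendsto.pow h1 2
  refine le_of_tendsto' h2 fun F => ?_
  refine (Finset.sum_mul_sq_le_sq_mul_sq _ _ _).trans ?_
  have hf' : HasSum (fun g => f (x * g) ^ 2) (∑' y, f y ^ 2) :=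
    (Equiv.mulLeft x).hasSum_iff.mpr hf.hasSum
  have h3 : ∑ g ∈ F, f (x * g) ^ 2 ≤ ∑' y, f y ^ 2 := sum_le_hasSum F (fun _ _ => sq_nonneg _) hf'
  have h4 : ∑ g ∈ F, hk S n g ^ 2 ≤ hk2 S n :=
    (hk_sq_summable S n).sum_le_tsum F (fun _ _ => sq_nonneg _)
  exact mul_le_mul h4 h3 (Finset.sum_nonneg fun _ _ => sq_nonneg _) (hk2_pos S n).le

theorem iter_tendsto_zero [Group G] (S : Finset G) (hS_sym : ∀ s ∈ S, s⁻¹ ∈ S)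
    (hdec : Tendsto (hk2 S) atTop (𝓝 0))
    (v : G → ℝ) (r : ℝ) (hr : 1 ≤ r) (hv : Summable fun x => |v x| ^ r) (x : G) :
    Tendsto (fun n => (lazyP S)^[n] v x) atTop (𝓝 0) := by
  have hr0 : 0 < r := by linarith
  set V := ∑' x, |v x| ^ r with hV
  have hb : ∀ y, |v y| ≤ V ^ (1 / r) := fun y => by
    have h1 : |v y| ^ r ≤ V := hv.le_tsum y fun _ _ => by positivity
    have h2 := Real.rpow_le_rpow (by positivity) h1 (one_div_pos.2 hr0).le
    rwa [← Real.rpow_mul (abs_nonneg _), mul_one_div_cancel hr0.ne', Real.rpow_one] at h2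
  have hV0 : 0 ≤ V := tsum_nonneg fun _ => by positivity
  have hvx : HasSum (fun g => |v (x * g)| ^ r) V := (Equiv.mulLeft x).hasSum_iff.mpr hv.hasSum
  have key : ∀ ε : ℝ, 0 < ε → ∀ n, |(lazyP S)^[n] v x| ≤
      ε + ε ^ (1 - r) * (Real.sqrt (hk2 S n) * V) := by
    intro ε hε n
    have h1 := iter_kernel S hS_sym n v _ hb x
    have h2 : HasSum (fun g => ε * hk S n g + ε ^ (1 - r) * (Real.sqrt (hk2 S n) * |v (x * g)| ^ r))
        (ε * 1 + ε ^ (1 - r) * (Real.sqrt (hk2 S n) * V)) :=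
      ((hk_hasSum S n).mul_left ε).add ((hvx.mul_left _).mul_left _)
    have hpt : ∀ g, ‖hk S n g * v (x * g)‖ ≤
        ε * hk S n g + ε ^ (1 - r) * (Real.sqrt (hk2 S n) * |v (x * g)| ^ r) := by
      intro g
      have hw0 := hk_nonneg S n g
      have hws : hk S n g ≤ Real.sqrt (hk2 S n) := by
        apply Real.le_sqrt_of_sq_le
        exact (hk_sq_summable S n).le_tsum g fun _ _ => sq_nonneg _
      rw [Real.norm_eq_abs, abs_mul, abs_of_nonneg hw0]
      have hnn : 0 ≤ ε ^ (1 - r) * |v (x * g)| ^ r := by positivity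
      have hvv : |v (x * g)| ≤ ε + ε ^ (1 - r) * |v (x * g)| ^ r := by
        rcases le_or_gt |v (x * g)| ε with h | h
        · linarith
        · have hp : 0 < |v (x * g)| := hε.trans h
          have h3 : |v (x * g)| = |v (x * g)| ^ (1 - r) * |v (x * g)| ^ r := by
            rw [← Real.rpow_add hp]; simp
          have h4 : |v (x * g)| ^ (1 - r) ≤ ε ^ (1 - r) :=
            Real.rpow_le_rpow_of_nonpos hε h.le (by linarith)
          have h5 : |v (x * g)| ^ (1 - r) * |v (x * g)| ^ r ≤ ε ^ (1 - r) * |v (x * g)| ^ r := by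
            gcongr
          linarith
      calc hk S n g * |v (x * g)| ≤ hk S n g * (ε + ε ^ (1 - r) * |v (x * g)| ^ r) := by gcongr
        _ = ε * hk S n g + hk S n g * (ε ^ (1 - r) * |v (x * g)| ^ r) := by ring
        _ ≤ ε * hk S n g + Real.sqrt (hk2 S n) * (ε ^ (1 - r) * |v (x * g)| ^ r) := by gcongr
        _ = _ := by ring
    have h3 := tsum_of_norm_bounded h2 hpt
    rw [h1.tsum_eq, Real.norm_eq_abs, mul_one] at h3
    exact h3
  rw [Metric.tendsto_atTop]
  intro δ hδ
  have hlim : Tendsto (fun n => δ / 2 + (δ / 2) ^ (1 - r) * (Real.sqrt (hk2 S n) * V)) atTop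
      (𝓝 (δ / 2 + (δ / 2) ^ (1 - r) * (Real.sqrt 0 * V))) :=
    ((((Real.continuous_sqrt.tendsto 0).comp hdec).mul_const V).const_mul _).const_add _
  have hlt : δ / 2 + (δ / 2) ^ (1 - r) * (Real.sqrt 0 * V) < δ := by
    rw [Real.sqrt_zero]; linarith
  obtain ⟨n₀, hn₀⟩ := eventually_atTop.1 (hlim.eventually_lt_const hlt)
  refine ⟨n₀, fun n hn => ?_⟩
  rw [Real.dist_eq, sub_zero]
  exact (key (δ / 2) (half_pos hδ) n).trans_lt (hn₀ n hn)

/-! ### The (subcritical) Sobolev inequality -/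

theorem minkowski_sum {ι : Type*} (F : Finset ι) (q : ℝ) (hq : 1 ≤ q) (h : ℕ → ι → ℝ) (n : ℕ) :
    (∑ x ∈ F, |∑ k ∈ Finset.range n, h k x| ^ q) ^ (1 / q) ≤
      ∑ k ∈ Finset.range n, (∑ x ∈ F, |h k x| ^ q) ^ (1 / q) := by
  have hq0 : q ≠ 0 := by linarith
  induction n with
  | zero => simp [Real.zero_rpow hq0, Real.zero_rpow (inv_ne_zero hq0)]
  | succ n ih =>
    simp only [Finset.sum_range_succ]
    exact (Real.Lp_add_le F _ _ hq).trans (by gcongr)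

theorem lazyP_sub [Group G] (S : Finset G) (f g : G → ℝ) :
    lazyP S (f - g) = lazyP S f - lazyP S g := by
  funext x
  simp only [lazyP_eq, Pi.sub_apply, Finset.sum_sub_distrib]
  ring

theorem iter_sub [Group G] (S : Finset G) (n : ℕ) (f g : G → ℝ) :
    (lazyP S)^[n] (f - g) = (lazyP S)^[n] f - (lazyP S)^[n] g := by
  induction n generalizing f g with
  | zero => rfl
  | succ n ih => simp only [Function.iterate_succ_apply, lazyP_sub, ih]

theorem sobolev_l2 [Group G] (S : Finset G) (hS_gen : Subgroup.closure (S : Set G) = ⊤)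
    (hS_sym : ∀ s ∈ S, s⁻¹ ∈ S)
    (N : ℕ) (hN : 5 ≤ N) (C₁ : ℝ) (hC₁ : 0 < C₁)
    (hgrowth : ∀ n : ℕ, 1 ≤ n →
      C₁ * (n : ℝ) ^ N ≤ (Nat.card {x : G // wordDist S 1 x ≤ n} : ℝ))
    (q : ℝ) (hq : 2 * (N : ℝ) / ((N : ℝ) - 4) < q) :
    ∃ A : ℝ, 0 < A ∧ ∀ u : G → ℝ, MemD22 S N u →
      (Summable fun x => |u x| ^ q) ∧
      ∑' x, |u x| ^ q ≤ (A * Real.sqrt (∑' x, (lap S u x) ^ 2)) ^ q := by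
  obtain ⟨A, hA, hdec⟩ := hk2_decay S hS_gen hS_sym N hN C₁ hC₁ hgrowth
  have hN5 : (5 : ℝ) ≤ N := by exact_mod_cast hN
  have hN4 : (0 : ℝ) < (N : ℝ) - 4 := by linarith
  have hr2 : 2 < 2 * (N : ℝ) / ((N : ℝ) - 4) := by
    rw [lt_div_iff₀ hN4]; linarith
  have hq2 : 2 < q := hr2.trans hq
  have hq0 : 0 < q := by linarith
  have hqN : 2 * (N : ℝ) < q * ((N : ℝ) - 4) := (div_lt_iff₀ hN4).1 hq
  have hlim : Tendsto (hk2 S) atTop (𝓝 0) := by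
    have h1 : Tendsto (fun n : ℕ => A * ((n : ℝ) + 1) ^ (-((N : ℝ) / 2))) atTop (𝓝 (A * 0)) := by
      refine Tendsto.const_mul A ?_
      refine (tendsto_rpow_neg_atTop (by linarith : 0 < (N : ℝ) / 2)).comp ?_
      exact tendsto_atTop_add_const_right _ _ tendsto_natCast_atTop_atTop
    rw [mul_zero] at h1
    exact squeeze_zero (fun n => (hk2_pos S n).le) hdec h1
  set e : ℝ := (q - 2) / (2 * q) with he
  have he0 : 0 < e := by have : 0 < q - 2 := by linarith
                         positivity
  have hθ : Summable fun n => hk2 S n ^ e := by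
    have h1 : Summable fun n : ℕ => A ^ e * (((n + 1 : ℕ) : ℝ)) ^ (-((N : ℝ) / 2) * e) := by
      refine Summable.mul_left _ ?_
      refine (summable_nat_add_iff (f := fun n : ℕ => (n : ℝ) ^ (-((N : ℝ) / 2) * e)) 1).2 ?_
      rw [Real.summable_nat_rpow, he]
      rw [neg_mul, neg_lt_neg_iff, div_mul_div_comm, lt_div_iff₀ (by positivity)]
      nlinarith
    refine Summable.of_nonneg_of_le (fun n => Real.rpow_nonneg (hk2_pos S n).le _) (fun n => ?_) h1
    have h2 := Real.rpow_le_rpow (hk2_pos S n).le (hdec n) he0.le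
    rw [Real.mul_rpow hA.le (by positivity), ← Real.rpow_mul (by positivity)] at h2
    push_cast
    exact h2
  set T := ∑' n, hk2 S n ^ e with hT
  have hTpos : 0 < T := hθ.tsum_pos (fun n => Real.rpow_nonneg (hk2_pos S n).le _) 0
    (Real.rpow_pos_of_pos (hk2_pos S 0) _)
  have hκ := kap_pos S
  refine ⟨T * kap S, by positivity, fun u hu => ?_⟩
  obtain ⟨hu1, hu2⟩ := hu
  set Λ := Real.sqrt (∑' x, (lap S u x) ^ 2) with hΛ
  have hΛ0 : 0 ≤ Λ := Real.sqrt_nonneg _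
  have hΛ2 : Λ ^ 2 = ∑' x, (lap S u x) ^ 2 := Real.sq_sqrt (tsum_nonneg fun _ => sq_nonneg _)
  set f : G → ℝ := u - lazyP S u with hf
  have hfx : ∀ x, f x ^ 2 = kap S ^ 2 * (lap S u x) ^ 2 := by
    intro x; simp only [hf, Pi.sub_apply, lazyP]; ring
  have hfs : Summable fun x => f x ^ 2 := by
    simp only [hfx]; exact hu2.mul_left _
  set L := kap S * Λ with hL
  have hL0 : 0 ≤ L := by positivity
  have hfL : ∑' x, f x ^ 2 = L ^ 2 := by
    simp only [hfx]; rw [tsum_mul_left, hL, mul_pow, hΛ2]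
  have htele : ∀ x n, ∑ k ∈ Finset.range n, (lazyP S)^[k] f x = u x - (lazyP S)^[n] u x := by
    intro x n
    induction n with
    | zero => simp
    | succ n ih =>
      rw [Finset.sum_range_succ, ih, hf, iter_sub, ← Function.iterate_succ_apply]
      simp
  have hconv : ∀ x, Tendsto (fun n => ∑ k ∈ Finset.range n, (lazyP S)^[k] f x) atTop (𝓝 (u x)) := by
    intro x
    simp only [htele]
    have := (iter_tendsto_zero S hS_sym hlim u _ (by linarith) hu1 x).const_sub (u x)
    simpa using this
  have hone : ∀ (F : Finset G) k, (∑ x ∈ F, |(lazyP S)^[k] f x| ^ q) ^ (1 / q) ≤ hk2 S k ^ e * L := by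
    intro F k
    have hh := hk2_pos S k
    set M := Real.sqrt (hk2 S k) * L with hM
    have hM0 : 0 ≤ M := by positivity
    have hsup : ∀ x, |(lazyP S)^[k] f x| ≤ M := by
      intro x
      refine abs_le_of_sq_le_sq ?_ hM0
      rw [hM, mul_pow, Real.sq_sqrt hh.le, ← hfL]
      exact iter_sup S hS_sym k f hfs x
    have h1 : ∑ x ∈ F, |(lazyP S)^[k] f x| ^ q ≤ M ^ (q - 2) * L ^ 2 := by
      calc ∑ x ∈ F, |(lazyP S)^[k] f x| ^ q
          ≤ ∑ x ∈ F, M ^ (q - 2) * ((lazyP S)^[k] f x) ^ 2 := by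
            refine Finset.sum_le_sum fun x _ => ?_
            have h2 : |(lazyP S)^[k] f x| ^ q
                = |(lazyP S)^[k] f x| ^ (q - 2) * ((lazyP S)^[k] f x) ^ 2 := by
              rw [← sq_abs ((lazyP S)^[k] f x), ← Real.rpow_natCast,
                ← Real.rpow_add_of_nonneg (abs_nonneg _) (by linarith) (by norm_num)]
              norm_num
            rw [h2]
            have := Real.rpow_le_rpow (abs_nonneg _) (hsup x) (by linarith : 0 ≤ q - 2)
            gcongr
        _ = M ^ (q - 2) * ∑ x ∈ F, ((lazyP S)^[k] f x) ^ 2 := by rw [Finset.mul_sum]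
        _ ≤ M ^ (q - 2) * L ^ 2 := by
            obtain ⟨h3, h4⟩ := iter_l2 S hfs k
            rw [hfL] at h4
            have := (h3.sum_le_tsum F fun _ _ => sq_nonneg _).trans h4
            gcongr
    have h5 : M ^ (q - 2) * L ^ 2 = (hk2 S k ^ e * L) ^ q := by
      rw [hM, Real.mul_rpow (Real.sqrt_nonneg _) hL0, Real.mul_rpow (by positivity) hL0,
        Real.sqrt_eq_rpow, ← Real.rpow_mul hh.le, ← Real.rpow_mul hh.le, mul_assoc,
        ← Real.rpow_natCast L 2,
        ← Real.rpow_add_of_nonneg hL0 (by linarith) (by norm_num)]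
      have e1 : 1 / 2 * (q - 2) = e * q := by rw [he]; field_simp
      have e2 : q - 2 + ((2 : ℕ) : ℝ) = q := by push_cast; ring
      rw [e1, e2]
    rw [h5] at h1
    have h6 := Real.rpow_le_rpow (Finset.sum_nonneg fun _ _ => by positivity) h1
      (one_div_pos.2 hq0).le
    rwa [← Real.rpow_mul (by positivity), mul_one_div_cancel hq0.ne', Real.rpow_one] at h6
  have hF : ∀ F : Finset G, ∑ x ∈ F, |u x| ^ q ≤ (T * kap S * Λ) ^ q := by
    intro F
    have h1 : ∀ n, ∑ x ∈ F, |∑ k ∈ Finset.range n, (lazyP S)^[k] f x| ^ q ≤ (T * kap S * Λ) ^ q := by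
      intro n
      have h2 := minkowski_sum F q (by linarith) (fun k x => (lazyP S)^[k] f x) n
      have h3 : ∑ k ∈ Finset.range n, (∑ x ∈ F, |(lazyP S)^[k] f x| ^ q) ^ (1 / q) ≤ T * L := by
        refine (Finset.sum_le_sum fun k _ => hone F k).trans ?_
        rw [← Finset.sum_mul]
        refine mul_le_mul_of_nonneg_right ?_ hL0
        exact hθ.sum_le_tsum _ fun k _ => Real.rpow_nonneg (hk2_pos S k).le _
      have h4 := h2.trans h3
      have h0 : 0 ≤ ∑ x ∈ F, |∑ k ∈ Finset.range n, (lazyP S)^[k] f x| ^ q :=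
        Finset.sum_nonneg fun _ _ => by positivity
      have h5 := Real.rpow_le_rpow (by positivity) h4 hq0.le
      rw [← Real.rpow_mul h0, one_div_mul_cancel hq0.ne', Real.rpow_one] at h5
      rwa [hL, ← mul_assoc] at h5
    refine le_of_tendsto' (x := atTop) (f := fun n => ∑ x ∈ F, |∑ k ∈ Finset.range n, (lazyP S)^[k] f x| ^ q) ?_ h1
    refine tendsto_finsetSum _ fun x _ => ?_
    exact ((hconv x).abs).rpow_const (Or.inr hq0.le)
  have hsum : Summable fun x => |u x| ^ q :=
    summable_of_sum_le (fun _ => by positivity) hF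
  exact ⟨hsum, hsum.tsum_le_of_sum_le hF⟩

/-! ### Summability of the kernel -/

theorem kernel_summable [Group G] (S : Finset G)
    (N : ℕ) (C₂ : ℝ) (hC₂ : 0 < C₂)
    (hfin : ∀ n : ℕ, 1 ≤ n → Finite {x : G // wordDist S 1 x ≤ n})
    (hgrowth : ∀ n : ℕ, 1 ≤ n →
      (Nat.card {x : G // wordDist S 1 x ≤ n} : ℝ) ≤ C₂ * (n : ℝ) ^ N)
    (β : ℝ) (hβ : (N : ℝ) < β) :
    Summable fun g : G => (wordDist S 1 g : ℝ) ^ (-β) := by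
  have hβ0 : 0 < β := lt_of_le_of_lt (Nat.cast_nonneg N) hβ
  have hser : Summable fun n : ℕ => (n : ℝ) ^ ((N : ℝ) - β - 1) := by
    rw [Real.summable_nat_rpow]; linarith
  have hpt : ∀ d M : ℕ, 2 * d ≤ M → (d : ℝ) ^ (-β) ≤
      (2 : ℝ) ^ (β + 1) * ∑ n ∈ Finset.range M, if d ≤ n then (n : ℝ) ^ (-β - 1) else 0 := by
    intro d M hdM
    rcases Nat.eq_zero_or_pos d with rfl | hd
    · rw [Nat.cast_zero, Real.zero_rpow (by linarith)]
      refine mul_nonneg (by positivity) (Finset.sum_nonneg fun n _ => ?_)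
      split_ifs <;> positivity
    · have hd' : (0 : ℝ) < d := by exact_mod_cast hd
      have h1 : ∑ n ∈ Finset.Ico d (2 * d), (2 * d : ℝ) ^ (-β - 1) ≤
          ∑ n ∈ Finset.range M, if d ≤ n then (n : ℝ) ^ (-β - 1) else 0 := by
        calc ∑ n ∈ Finset.Ico d (2 * d), (2 * d : ℝ) ^ (-β - 1)
            ≤ ∑ n ∈ Finset.Ico d (2 * d), if d ≤ n then (n : ℝ) ^ (-β - 1) else 0 := by
              refine Finset.sum_le_sum fun n hn => ?_
              rw [Finset.mem_Ico] at hn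
              rw [if_pos hn.1]
              refine Real.rpow_le_rpow_of_nonpos ?_ ?_ (by linarith)
              · exact_mod_cast lt_of_lt_of_le hd hn.1
              · exact_mod_cast hn.2.le
          _ ≤ _ := by
              refine Finset.sum_le_sum_of_subset_of_nonneg ?_ fun n _ _ => ?_
              · intro n hn
                rw [Finset.mem_Ico] at hn
                exact Finset.mem_range.2 (lt_of_lt_of_le hn.2 hdM)
              · split_ifs <;> positivity
      rw [Finset.sum_const, Nat.card_Ico, nsmul_eq_mul] at h1
      have h2 : ((2 * d - d : ℕ) : ℝ) = d := by congr 1; omega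
      rw [h2] at h1
      have h3 : (d : ℝ) ^ (-β) = 2 ^ (β + 1) * (d * (2 * d : ℝ) ^ (-β - 1)) := by
        rw [Real.mul_rpow (by norm_num) hd'.le]
        have e1 : (2 : ℝ) ^ (β + 1) * (2 : ℝ) ^ (-β - 1) = 1 := by
          rw [← Real.rpow_add (by norm_num)]; ring_nf; simp
        have e2 : (d : ℝ) * (d : ℝ) ^ (-β - 1) = (d : ℝ) ^ (-β) := by
          nth_rewrite 1 [← Real.rpow_one (d : ℝ)]
          rw [← Real.rpow_add hd']; ring_nf
        calc (d : ℝ) ^ (-β) = ((2 : ℝ) ^ (β + 1) * (2 : ℝ) ^ (-β - 1)) *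
              ((d : ℝ) * (d : ℝ) ^ (-β - 1)) := by rw [e2, e1, one_mul]
          _ = _ := by ring
      rw [h3]
      gcongr
  refine summable_of_sum_le (c := (2 : ℝ) ^ (β + 1) * (C₂ * ∑' n : ℕ, (n : ℝ) ^ ((N : ℝ) - β - 1)))
    (fun _ => by positivity) fun F => ?_
  set M := F.sup fun g => 2 * wordDist S 1 g with hM
  calc ∑ g ∈ F, (wordDist S 1 g : ℝ) ^ (-β)
      ≤ ∑ g ∈ F, (2 : ℝ) ^ (β + 1) * ∑ n ∈ Finset.range M,
          if wordDist S 1 g ≤ n then (n : ℝ) ^ (-β - 1) else 0 :=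
        Finset.sum_le_sum fun g hg => hpt _ _ (Finset.le_sup (f := fun g => 2 * wordDist S 1 g) hg)
    _ = (2 : ℝ) ^ (β + 1) * ∑ n ∈ Finset.range M, ∑ g ∈ F,
          if wordDist S 1 g ≤ n then (n : ℝ) ^ (-β - 1) else 0 := by
        rw [← Finset.mul_sum, Finset.sum_comm]
    _ ≤ (2 : ℝ) ^ (β + 1) * ∑ n ∈ Finset.range M, C₂ * (n : ℝ) ^ ((N : ℝ) - β - 1) := by
        gcongr with n hn
        rw [← Finset.sum_filter, Finset.sum_const, nsmul_eq_mul]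
        rcases Nat.eq_zero_or_pos n with rfl | hn0
        · rw [Nat.cast_zero, Real.zero_rpow (by linarith), mul_zero]
          positivity
        · have hn' : (0 : ℝ) < n := by exact_mod_cast hn0
          have hc : ((F.filter fun g => wordDist S 1 g ≤ n).card : ℝ) ≤ C₂ * (n : ℝ) ^ N := by
            refine le_trans ?_ (hgrowth n hn0)
            have hf : Set.Finite {x : G | wordDist S 1 x ≤ n} := hfin n hn0
            have h1 : (F.filter fun g => wordDist S 1 g ≤ n).card ≤
                Set.ncard {x : G | wordDist S 1 x ≤ n} := by
              rw [← Set.ncard_coe_finset]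
              refine Set.ncard_le_ncard (fun g hg => ?_) hf
              simpa using (Finset.mem_filter.1 hg).2
            exact_mod_cast h1
          calc _ ≤ C₂ * (n : ℝ) ^ N * (n : ℝ) ^ (-β - 1) := by gcongr
            _ = C₂ * (n : ℝ) ^ ((N : ℝ) - β - 1) := by
              rw [← Real.rpow_natCast, mul_assoc, ← Real.rpow_add hn']
              ring_nf
    _ ≤ _ := by
        rw [← Finset.mul_sum]
        gcongr
        exact hser.sum_le_tsum _ fun _ _ => by positivity

/-! ### The (subcritical) Hardy-Littlewood-Sobolev inequality -/

theorem young_pointwise (r : ℝ) (hr1 : 1 < r) (hr2 : r < 2) (A B K : ℝ) (hA : 0 ≤ A) (hB : 0 ≤ B)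
    (hK : 0 ≤ K) :
    A * B * K ≤ A ^ r * B ^ r + A ^ r * K ^ (r / (2 * (r - 1))) + B ^ r * K ^ (r / (2 * (r - 1))) := by
  have hr0 : 0 < r := by linarith
  have hr1' : 0 < r - 1 := by linarith
  set s := r / (2 * (r - 1)) with hs
  have hs0 : 0 < s := by positivity
  set a := 2 / r - 1 with ha
  set b := 1 - 1 / r with hb
  have ha0 : 0 ≤ a := by
    have : 1 ≤ 2 / r := by rw [le_div_iff₀ hr0]; linarith
    linarith
  have hb0 : 0 ≤ b := by
    have : 1 / r ≤ 1 := by rw [div_le_one hr0]; linarith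
    linarith
  have hab : r * a + r * b = 1 := by rw [ha, hb]; field_simp; ring
  have hbs : s * b + s * b = 1 := by rw [hs, hb]; field_simp; ring
  have hab1 : a + b + b = 1 := by rw [ha, hb]; ring
  have h := Real.geom_mean_le_arith_mean3_weighted ha0 hb0 hb0
    (p₁ := A ^ r * B ^ r) (p₂ := A ^ r * K ^ s) (p₃ := B ^ r * K ^ s)
    (by positivity) (by positivity) (by positivity) hab1
  have hm : ∀ X : ℝ, 0 ≤ X → (X ^ r) ^ a * (X ^ r) ^ b = X := fun X hX => by
    rw [← Real.rpow_mul hX, ← Real.rpow_mul hX,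
      ← Real.rpow_add_of_nonneg hX (by positivity) (by positivity), hab, Real.rpow_one]
  have hmK : (K ^ s) ^ b * (K ^ s) ^ b = K := by
    rw [← Real.rpow_mul hK,
      ← Real.rpow_add_of_nonneg hK (by positivity) (by positivity), hbs, Real.rpow_one]
  have hlhs : (A ^ r * B ^ r) ^ a * (A ^ r * K ^ s) ^ b * (B ^ r * K ^ s) ^ b = A * B * K := by
    rw [Real.mul_rpow (by positivity) (by positivity), Real.mul_rpow (by positivity) (by positivity),
      Real.mul_rpow (by positivity) (by positivity)]
    calc _ = ((A ^ r) ^ a * (A ^ r) ^ b) * ((B ^ r) ^ a * (B ^ r) ^ b)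
          * ((K ^ s) ^ b * (K ^ s) ^ b) := by ring
      _ = _ := by rw [hm A hA, hm B hB, hmK]
  rw [hlhs] at h
  have ha1 : a ≤ 1 := by linarith
  have hb1 : b ≤ 1 := by linarith
  have n1 : 0 ≤ A ^ r * B ^ r := by positivity
  have n2 : 0 ≤ A ^ r * K ^ s := by positivity
  have n3 : 0 ≤ B ^ r * K ^ s := by positivity
  nlinarith [mul_le_of_le_one_left n1 ha1, mul_le_of_le_one_left n2 hb1,
    mul_le_of_le_one_left n3 hb1]

/-- The shear `(x, y) ↦ (y, x⁻¹ y)`. -/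
def shear [Group G] : G × G ≃ G × G where
  toFun z := (z.2, z.1⁻¹ * z.2)
  invFun w := (w.1 * w.2⁻¹, w.1)
  left_inv z := by simp
  right_inv w := by simp

/-- The shear `(x, y) ↦ (x, x⁻¹ y)`. -/
def shear' [Group G] : G × G ≃ G × G where
  toFun z := (z.1, z.1⁻¹ * z.2)
  invFun w := (w.1, w.1 * w.2)
  left_inv z := by simp
  right_inv w := by simp

theorem hasSum_shear [Group G] (F : G × G → ℝ) (a : ℝ) (h : HasSum F a) :
    HasSum (fun z : G × G => F (z.2, z.1⁻¹ * z.2)) a :=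
  (Equiv.hasSum_iff (f := F) shear).mpr h

theorem hasSum_shear' [Group G] (F : G × G → ℝ) (a : ℝ) (h : HasSum F a) :
    HasSum (fun z : G × G => F (z.1, z.1⁻¹ * z.2)) a :=
  (Equiv.hasSum_iff (f := F) shear').mpr h

theorem hasSum_mul_nonneg (a b : G → ℝ) (ha : Summable a) (hb : Summable b)
    (ha0 : ∀ x, 0 ≤ a x) (hb0 : ∀ x, 0 ≤ b x) :
    HasSum (fun z : G × G => a z.1 * b z.2) ((∑' x, a x) * ∑' x, b x) := by
  have h : Summable fun z : G × G => a z.1 * b z.2 := ha.mul_of_nonneg hb ha0 hb0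
  exact ha.hasSum.mul hb.hasSum h

theorem hls [Group G] (R : G → G → ℝ) (hR0 : ∀ x y, 0 ≤ R x y) (c : ℝ) (hc : 0 < c)
    (K : G → ℝ) (hK0 : ∀ g, 0 ≤ K g) (hRK : ∀ x y, R x y ≤ c * K (x⁻¹ * y))
    (r s : ℝ) (hr1 : 1 < r) (hr2 : r < 2) (hs : s = r / (2 * (r - 1))) (hK : Summable fun g => K g ^ s)
    (f : G → ℝ) (hf0 : ∀ x, 0 ≤ f x) (hf : Summable fun x => f x ^ r) :
    ∑' x, conv R f x * f x ≤ c * ((∑' x, f x ^ r) * (∑' x, f x ^ r) +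
      (∑' x, f x ^ r) * (∑' g, K g ^ s) +
      (∑' x, f x ^ r) * (∑' g, K g ^ s)) := by
  have hff : HasSum (fun z : G × G => f z.1 ^ r * f z.2 ^ r) ((∑' x, f x ^ r) * (∑' x, f x ^ r)) :=
    hasSum_mul_nonneg (fun x => f x ^ r) (fun x => f x ^ r) hf hf
      (fun x => Real.rpow_nonneg (hf0 x) _) (fun x => Real.rpow_nonneg (hf0 x) _)
  have hfK : HasSum (fun z : G × G => f z.1 ^ r * K z.2 ^ s) ((∑' x, f x ^ r) * (∑' g, K g ^ s)) :=
    hasSum_mul_nonneg (fun x => f x ^ r) (fun x => K x ^ s) hf hK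
      (fun x => Real.rpow_nonneg (hf0 x) _) (fun x => Real.rpow_nonneg (hK0 x) _)
  have h1 : HasSum (fun z : G × G => f z.1 ^ r * K (z.1⁻¹ * z.2) ^ s)
      ((∑' x, f x ^ r) * (∑' g, K g ^ s)) := hasSum_shear' (fun z => f z.1 ^ r * K z.2 ^ s) _ hfK
  have h2 : HasSum (fun z : G × G => f z.2 ^ r * K (z.1⁻¹ * z.2) ^ s)
      ((∑' x, f x ^ r) * (∑' g, K g ^ s)) := hasSum_shear (fun z => f z.1 ^ r * K z.2 ^ s) _ hfK
  have htot := ((hff.add h1).add h2).mul_left c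
  have hpt : ∀ z : G × G, R z.1 z.2 * f z.2 * f z.1 ≤ c * (f z.1 ^ r * f z.2 ^ r +
      f z.1 ^ r * K (z.1⁻¹ * z.2) ^ s + f z.2 ^ r * K (z.1⁻¹ * z.2) ^ s) := by
    intro z
    have hy := young_pointwise r hr1 hr2 (f z.1) (f z.2) (K (z.1⁻¹ * z.2)) (hf0 _) (hf0 _) (hK0 _)
    rw [← hs] at hy
    calc R z.1 z.2 * f z.2 * f z.1 ≤ c * K (z.1⁻¹ * z.2) * f z.2 * f z.1 := by
          have e1 := hf0 z.1
          have e2 := hf0 z.2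
          have e3 := hRK z.1 z.2
          gcongr
      _ = c * (f z.1 * f z.2 * K (z.1⁻¹ * z.2)) := by ring
      _ ≤ _ := mul_le_mul_of_nonneg_left hy hc.le
  have hsum : Summable fun z : G × G => R z.1 z.2 * f z.2 * f z.1 :=
    Summable.of_nonneg_of_le (fun z => mul_nonneg (mul_nonneg (hR0 _ _) (hf0 _)) (hf0 _)) hpt
      htot.summable
  have heq : ∑' x, conv R f x * f x = ∑' z : G × G, R z.1 z.2 * f z.2 * f z.1 := by
    rw [hsum.tsum_prod]
    simp only [conv, tsum_mul_right]
  rw [heq]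
  exact hasSum_le hpt hsum.hasSum htot

theorem sobolev_type_inequality_biharmonic
    [Group G] [Countable G]
    (S : Finset G) (hS_gen : Subgroup.closure (S : Set G) = ⊤)
    (hS_sym : ∀ s ∈ S, s⁻¹ ∈ S) (hS_e : (1 : G) ∉ S)
    (N : ℕ) (hN : 5 ≤ N)
    (C₁ C₂ : ℝ) (hC₁ : 0 < C₁) (hC₂ : 0 < C₂)
    (hgrowth : ∀ n : ℕ, 1 ≤ n →
      C₁ * (n : ℝ) ^ N ≤ (Nat.card {x : G // wordDist S 1 x ≤ n} : ℝ) ∧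
      (Nat.card {x : G // wordDist S 1 x ≤ n} : ℝ) ≤ C₂ * (n : ℝ) ^ N)
    (α : ℝ) (hα : 0 < α) (hαN : α < N)
    (Rα : G → G → ℝ) (hR_nonneg : ∀ x y, 0 ≤ Rα x y)
    (hR_symm : ∀ x y, Rα x y = Rα y x)
    (c₁ c₂ : ℝ) (hc₁ : 0 < c₁) (hc₂ : 0 < c₂)
    (hR_low : ∀ x y : G, x ≠ y → c₁ * (wordDist S x y : ℝ) ^ (α - (N : ℝ)) ≤ Rα x y)
    (hR_up : ∀ x y : G, x ≠ y → Rα x y ≤ c₂ * (wordDist S x y : ℝ) ^ (α - (N : ℝ)))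
    (hR_diag : ∀ x : G, Rα x x ≤ c₂)
    (p : ℝ) (hp : ((N : ℝ) + α) / ((N : ℝ) - 4) < p) :
    ∃ C : ℝ, 0 < C ∧ ∀ u : G → ℝ, MemD22 S N u →
      (∑' x, conv Rα (fun y => |u y| ^ p) x * |u x| ^ p) ≤
        C * (∑' x, (lap S u x) ^ 2) ^ p := by
  have hN5 : (5 : ℝ) ≤ N := by exact_mod_cast hN
  have hN4 : (0 : ℝ) < (N : ℝ) - 4 := by linarith
  have hNα : (0 : ℝ) < (N : ℝ) + α := by linarith
  have hp0 : 0 < p := lt_trans (by positivity) hp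
  have hp' : (N : ℝ) + α < p * ((N : ℝ) - 4) := (div_lt_iff₀ hN4).1 hp
  -- choice of the exponent
  obtain ⟨r, hrl, hru⟩ : ∃ r : ℝ, max 1 (2 * (N : ℝ) / (p * ((N : ℝ) - 4))) < r ∧
      r < 2 * (N : ℝ) / ((N : ℝ) + α) := by
    refine exists_between (max_lt ?_ ?_)
    · rw [lt_div_iff₀ hNα]; linarith
    · exact div_lt_div_of_pos_left (by linarith) hNα hp'
  have hr1 : 1 < r := lt_of_le_of_lt (le_max_left _ _) hrl
  have hrp : 2 * (N : ℝ) / (p * ((N : ℝ) - 4)) < r := lt_of_le_of_lt (le_max_right _ _) hrl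
  have hrNα : r * ((N : ℝ) + α) < 2 * N := (lt_div_iff₀ hNα).1 hru
  have hr2 : r < 2 := by nlinarith
  have hr0 : 0 < r := by linarith
  have hr1' : 0 < r - 1 := by linarith
  have hq : 2 * (N : ℝ) / ((N : ℝ) - 4) < p * r := by
    rw [div_lt_iff₀ (by positivity)] at hrp
    rw [div_lt_iff₀ hN4]; linarith
  have hg1 : ∀ n : ℕ, 1 ≤ n →
      C₁ * (n : ℝ) ^ N ≤ (Nat.card {x : G // wordDist S 1 x ≤ n} : ℝ) := fun n hn => (hgrowth n hn).1
  have hfin : ∀ n : ℕ, 1 ≤ n → Finite {x : G // wordDist S 1 x ≤ n} := by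
    intro n hn
    obtain ⟨B, hB, -, -⟩ := exists_ball S hS_gen hS_sym N C₁ hC₁ n hn (hg1 n hn)
    have hsub : {x : G | wordDist S 1 x ≤ n} ⊆ (B : Set G) := fun g hg => (hB g).2 hg
    exact B.finite_toSet.subset hsub
  obtain ⟨A, hA, hsob⟩ := sobolev_l2 S hS_gen hS_sym N hN C₁ hC₁ hg1 (p * r) hq
  set s := r / (2 * (r - 1)) with hs
  have hs0 : 0 < s := by positivity
  have hβ : (N : ℝ) < ((N : ℝ) - α) * s := by
    rw [hs, mul_div_assoc', lt_div_iff₀ (by positivity)]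
    nlinarith
  classical
  -- the model kernel
  set K : G → ℝ := fun g => if g = 1 then 1 else (wordDist S 1 g : ℝ) ^ (α - (N : ℝ)) with hKdef
  have hK0 : ∀ g, 0 ≤ K g := by
    intro g; simp only [hKdef]; split_ifs <;> positivity
  have hRK : ∀ x y, Rα x y ≤ c₂ * K (x⁻¹ * y) := by
    intro x y
    by_cases h : x = y
    · subst h
      simpa [hKdef] using hR_diag x
    · have h1 : x⁻¹ * y ≠ 1 := fun h2 => h (inv_mul_eq_one.1 h2)
      simp only [hKdef, if_neg h1]
      rw [← wordDist_left]
      exact hR_up x y h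
  have hK : Summable fun g => K g ^ s := by
    have h1 := kernel_summable S N C₂ hC₂ hfin (fun n hn => (hgrowth n hn).2) _ hβ
    have h2 := (hasSum_ite_eq (1 : G) (1 : ℝ)).summable
    refine Summable.of_nonneg_of_le (fun g => Real.rpow_nonneg (hK0 g) _) (fun g => ?_) (h2.add h1)
    by_cases h : g = 1
    · simp only [hKdef, if_pos h, Real.one_rpow]
      have : (0 : ℝ) ≤ (wordDist S 1 g : ℝ) ^ (-(((N : ℝ) - α) * s)) := by positivity
      linarith
    · simp only [hKdef, if_neg h]
      rw [← Real.rpow_mul (Nat.cast_nonneg _), zero_add]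
      apply le_of_eq
      ring_nf
  set k := ∑' g, K g ^ s with hk
  have hk0 : 0 ≤ k := tsum_nonneg fun g => Real.rpow_nonneg (hK0 g) _
  set Q := A ^ (p * r) with hQ
  have hQ0 : 0 < Q := by positivity
  refine ⟨c₂ * (Q * Q + Q * k + Q * k), by positivity, fun u hu => ?_⟩
  obtain ⟨hus, hub⟩ := hsob u hu
  set E := ∑' x, (lap S u x) ^ 2 with hE
  have hE0 : 0 ≤ E := tsum_nonneg fun _ => sq_nonneg _
  set Λ := Real.sqrt E with hΛ
  have hpr : p * r ≠ 0 := by positivity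
  rcases hE0.eq_or_lt with hE1 | hE1
  · -- zero energy: `u = 0`
    have hΛ0 : Λ = 0 := by rw [hΛ, ← hE1, Real.sqrt_zero]
    rw [hΛ0, mul_zero, Real.zero_rpow hpr] at hub
    have hz : ∀ x, |u x| ^ p = 0 := by
      intro x
      have h1 : |u x| ^ (p * r) ≤ 0 := (hus.le_tsum x fun _ _ => by positivity).trans hub
      have h2 : |u x| ^ (p * r) = 0 := le_antisymm h1 (by positivity)
      have h3 : |u x| = 0 := ((Real.rpow_eq_zero (abs_nonneg _) hpr).1 h2)
      rw [h3, Real.zero_rpow hp0.ne']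
    simp only [hz, mul_zero, tsum_zero]
    positivity
  · have hΛ0 : 0 < Λ := Real.sqrt_pos.2 hE1
    set t := Λ ^ p with ht
    have ht0 : 0 < t := by positivity
    set f : G → ℝ := fun x => t⁻¹ * |u x| ^ p with hf
    have hf0 : ∀ x, 0 ≤ f x := fun x => by simp only [hf]; positivity
    have hfr : ∀ x, f x ^ r = (t ^ r)⁻¹ * |u x| ^ (p * r) := by
      intro x
      simp only [hf]
      rw [Real.mul_rpow (by positivity) (by positivity), Real.inv_rpow ht0.le,
        ← Real.rpow_mul (abs_nonneg _)]
    have hfs : Summable fun x => f x ^ r := by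
      simp only [hfr]; exact hus.mul_left _
    have hfQ : ∑' x, f x ^ r ≤ Q := by
      simp only [hfr]
      rw [tsum_mul_left, inv_mul_le_iff₀ (by positivity)]
      refine hub.trans (le_of_eq ?_)
      rw [Real.mul_rpow hA.le hΛ0.le, ht, ← Real.rpow_mul hΛ0.le, hQ, mul_comm]
    have hF0 : 0 ≤ ∑' x, f x ^ r := tsum_nonneg fun x => Real.rpow_nonneg (hf0 x) _
    have hmain := hls Rα hR_nonneg c₂ hc₂ K hK0 hRK r s hr1 hr2 hs hK f hf0 hfs
    have hbound : ∑' x, conv Rα f x * f x ≤ c₂ * (Q * Q + Q * k + Q * k) := by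
      refine hmain.trans ?_
      gcongr
    have hscale : ∑' x, conv Rα (fun y => |u y| ^ p) x * |u x| ^ p
        = t ^ 2 * ∑' x, conv Rα f x * f x := by
      rw [← tsum_mul_left]
      refine tsum_congr fun x => ?_
      have h1 : conv Rα f x = t⁻¹ * conv Rα (fun y => |u y| ^ p) x := by
        simp only [conv, hf]
        rw [← tsum_mul_left]
        exact tsum_congr fun y => by ring
      rw [h1]
      simp only [hf]
      field_simp
    have ht2 : t ^ 2 = E ^ p := by
      rw [ht, ← Real.rpow_mul_natCast hΛ0.le, mul_comm, Real.rpow_natCast_mul hΛ0.le, hΛ,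
        Real.sq_sqrt hE0]
    rw [hscale, ht2, mul_comm]
    gcongr

end Choquard
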